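/- Every hyperpath, i.e., every path hypergraph in which all edges have size at least 3, is (Z₂×Z₂)-cordial. -/

import Mathlib

/-!
The path is labeled edge by edge, keeping every prefix balanced. A prefix is described by its vertex
label counts, its edge label counts and the label of the vertex shared with the next edge (its exit
label). Appending an edge labels `k ≥ 2` new vertices. As the four elements of `Z₂ × Z₂` sum to
zero, four new vertices with distinct labels affect neither the balance nor the edge label, so only
`k ∈ {2, 3, 4, 5}` and the vertex counts up to a common constant matter (`Step.shift`).

Call a state standard if all edge labels occur equally often, the exit label is `0`, and the surplus
vertex labels are an initial segment of `0, (1,0), (0,1), (1,1)`. The key fact is `block`: for any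
sizes of the next four edges, a standard state can be continued to a standard state, the four edges
receiving distinct labels. This is a finite statement (4 residues times `4 ^ 4` size patterns); it
is verified by evaluating a backtracking search (`searchAll_true`) whose correctness is
`search_sound`. A single vertex labeled `0` is a standard state, so a path with any number of edges
can be labeled by extending it virtually to a multiple of four edges and truncating
(`exists_reach`).

`Reach.realize` turns the abstract sequence of states into an actual labeling: each edge meets the
preceding part in exactly one vertex, and its new vertices can be given any prescribed label counts
with a prescribed label at the vertex shared with the next edge.
-/

open Finset

open Finset

/-- The Klein four-group `Z₂ × Z₂`. -/
abbrev K4 : Type := ZMod 2 × ZMod 2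

/-- The edge label induced by a vertex labeling: the sum of the labels of the
vertices of the edge. -/
def edgeSum {V : Type*} (c : V → K4) (e : Finset V) : K4 :=
  ∑ v ∈ e, c v

/-- A labeling `c` of the vertex set `Vs` is `Z₂×Z₂`-friendly if any two label
classes differ in size by at most one. -/
def Friendly {V : Type*} [DecidableEq V] (Vs : Finset V) (c : V → K4) : Prop :=
  ∀ a b : K4,
    |((Vs.filter fun v => c v = a).card : ℤ) -
      ((Vs.filter fun v => c v = b).card : ℤ)| ≤ 1

/-- A hypergraph with vertex set `Vs` and edge set `E` is `Z₂×Z₂`-cordial if it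
admits a `Z₂×Z₂`-friendly vertex labeling whose induced edge label classes
differ in size by at most one. -/
def Cordial {V : Type*} [DecidableEq V] (Vs : Finset V) (E : Finset (Finset V)) : Prop :=
  ∃ c : V → K4, Friendly Vs c ∧
    ∀ a b : K4,
      |((E.filter fun e => edgeSum c e = a).card : ℤ) -
        ((E.filter fun e => edgeSum c e = b).card : ℤ)| ≤ 1

/-- `IsPathHypergraph Vs m e` says that the distinct edges `e 0, …, e (m-1)`
form a path hypergraph on the vertex set `Vs`: consecutive edges intersect in
exactly one vertex, non-consecutive edges are disjoint, and the edges cover all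
vertices. -/
def IsPathHypergraph {V : Type*} [DecidableEq V] (Vs : Finset V) (m : ℕ)
    (e : Fin m → Finset V) : Prop :=
  Function.Injective e ∧
    (∀ i j : Fin m, (i : ℕ) + 1 = (j : ℕ) → (e i ∩ e j).card = 1) ∧
    (∀ i j : Fin m, (i : ℕ) + 2 ≤ (j : ℕ) → e i ∩ e j = ∅) ∧
    Finset.univ.biUnion e = Vs

/-! ### Steps between states -/

/-- Any two values of the count function `p` differ by at most one. -/
def Balanced4 (p : K4 → ℕ) : Prop := ∀ a b, p a ≤ p b + 1

/-- The sum of all labels of a vertex set on which each label `a` is used `p a` times. -/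
def wt (p : K4 → ℕ) : K4 := ∑ a, p a • a

/-- One more edge: `k` new vertices are labeled, which changes the vertex label counts from `p` to the
balanced counts `p'`. The edge shares with the earlier part a vertex labeled `x`, some new vertex
(the exit of the edge) is labeled `y`, and the induced edge label is `s`. The formula `sum_label`
uses that `wt p' - wt p = wt p + wt p'` in characteristic two. -/
structure Step (k : ℕ) (p : K4 → ℕ) (x s : K4) (p' : K4 → ℕ) (y : K4) : Prop where
  le : ∀ a, p a ≤ p' a
  lt : p y < p' y
  sum_eq : ∑ a, p' a = ∑ a, p a + k
  sum_label : s = x + wt p + wt p'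
  bal : Balanced4 p'

theorem card_K4 : Fintype.card K4 = 4 := by decide

/-- `StepChain ks p x used q`: starting from vertex counts `p` and exit label `x`, edges with `ks` new
vertices each can be appended so that their labels are pairwise distinct and not in `used`, ending
with vertex counts `q` and exit label `0`. -/
def StepChain : List ℕ → (K4 → ℕ) → K4 → List K4 → (K4 → ℕ) → Prop
  | [], p, x, _, q => p = q ∧ x = 0
  | k :: ks, p, x, used, q =>
    ∃ s p' y, s ∉ used ∧ Step k p x s p' y ∧ StepChain ks p' y (s :: used) q

theorem wt_add_const (p : K4 → ℕ) (d : ℕ) : wt (fun a => p a + d) = wt p := by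
  have h : ∑ a : K4, a = 0 := by decide
  have h' : ∑ a : K4, d • a = 0 := by rw [← Finset.smul_sum, h, smul_zero]
  simp only [wt, add_smul, Finset.sum_add_distrib, h', add_zero]

/-- Using each of the four labels `c` more times on the new vertices changes neither balance nor the
edge label, because the four labels sum to zero. Hence only `k` modulo `4` matters. -/
theorem Step.shift {k : ℕ} {p : K4 → ℕ} {x s : K4} {p' : K4 → ℕ} {y : K4}
    (h : Step k p x s p' y) (c d : ℕ) :
    Step (k + 4 * c) (fun a => p a + d) x s (fun a => p' a + (d + c)) y where
  le a := by have := h.le a; omega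
  lt := by have := h.lt; omega
  sum_eq := by
    have := h.sum_eq
    simp only [Finset.sum_add_distrib, Finset.sum_const, Finset.card_univ, card_K4, smul_eq_mul]
    omega
  sum_label := by rw [wt_add_const, wt_add_const]; exact h.sum_label
  bal a b := by have := h.bal a b; dsimp only; omega

theorem StepChain.shift : ∀ {ks ks' : List ℕ} {p : K4 → ℕ} {x : K4} {u : List K4} {q : K4 → ℕ}
    (_ : StepChain ks p x u q) (_ : List.Forall₂ (fun k k' => ∃ c, k' = k + 4 * c) ks ks') (d : ℕ),
    ∃ c, ks'.sum = ks.sum + 4 * c ∧ StepChain ks' (fun a => p a + d) x u (fun a => q a + (d + c))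
  | [], _, p, x, u, q, h, .nil, d => by
    obtain ⟨rfl, rfl⟩ := h
    exact ⟨0, by simp, by simp [StepChain]⟩
  | k :: ks, _, p, x, u, q, h, .cons ⟨c, hc⟩ hr, d => by
    obtain ⟨s, p', y, hs, hst, hp⟩ := h
    obtain ⟨c', hc', hshift⟩ := hp.shift hr (d + c)
    refine ⟨c + c', ?_, s, _, y, hs, hc ▸ hst.shift c d, ?_⟩
    · simp only [List.sum_cons]; omega
    · simpa only [add_assoc] using hshift

/-! ### The four-edge search -/

/-- `cand r σ` lists the `r`-element subsets of `{0, 1, 2, 3}` (as bit masks) whose elements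
have bitwise XOR `σ`. -/
def cand : ℕ → ℕ → List ℕ
  | 0, 0 => [0]
  | 1, 0 => [1]
  | 1, 1 => [2]
  | 1, 2 => [4]
  | 1, 3 => [8]
  | 2, 1 => [3, 12]
  | 2, 2 => [5, 10]
  | 2, 3 => [9, 6]
  | 3, 0 => [14]
  | 3, 1 => [13]
  | 3, 2 => [11]
  | 3, 3 => [7]
  | _, _ => []

/-- The `a`-th binary digit of `S`, that is, the indicator of `a ∈ S` for a bit mask `S`. The
underlying functions on `ℕ` are written without operator notation, here and below, so that the
kernel evaluates them directly. -/
def bit (S a : ℕ) : ℕ := Nat.land (Nat.shiftRight S a) 1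

/-- XOR of the elements of the bit mask `S ⊆ {0, 1, 2, 3}`. -/
def sig (S : ℕ) : ℕ :=
  Nat.xor (bit S 1) (Nat.xor (Nat.mul 2 (bit S 2)) (Nat.mul 3 (bit S 3)))

/-- `bit S ≤ bit S' + d` pointwise on the four labels. -/
def leB (d S S' : ℕ) : Bool :=
  [0, 1, 2, 3].all fun a => Nat.ble (bit S a) (Nat.add (bit S' a) d)

/-- `bit S < bit S' + d` at the label `a`. -/
def ltB (d S S' a : ℕ) : Bool := Nat.blt (bit S a) (Nat.add (bit S' a) d)

/-- `search ks n S x used` decides by backtracking whether a labeled prefix with `n` vertices, whose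
label counts are `cnt n S`, with exit label `x`, can be extended by edges with `ks` new vertices
each, so that all prefixes are friendly, the new edge labels are distinct and not in `used`, and the
final state has label counts `std` and exit label `0`. -/
def search : List ℕ → ℕ → ℕ → ℕ → List ℕ → Bool
  | [], n, S, x, _ => Nat.beq x 0 && Nat.beq S (Nat.sub (Nat.pow 2 (Nat.mod n 4)) 1)
  | k :: ks, n, S, x, used =>
    [0, 1, 2, 3].any fun s =>
      (used.all fun u => not (Nat.beq s u)) &&
      (cand (Nat.mod (Nat.add n k) 4) (Nat.xor s (Nat.xor x (sig S)))).any fun S' =>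
        leB (Nat.sub (Nat.div (Nat.add n k) 4) (Nat.div n 4)) S S' &&
        [0, 1, 2, 3].any fun y =>
          ltB (Nat.sub (Nat.div (Nat.add n k) 4) (Nat.div n 4)) S S' y &&
          search ks (Nat.add n k) S' y (s :: used)

/-- The search succeeds from all four standard states and for all quadruples of edge types. -/
def searchAll : Bool :=
  [0, 1, 2, 3].all fun r => [2, 3, 4, 5].all fun k₁ => [2, 3, 4, 5].all fun k₂ =>
  [2, 3, 4, 5].all fun k₃ => [2, 3, 4, 5].all fun k₄ =>
    search [k₁, k₂, k₃, k₄] r (Nat.sub (Nat.pow 2 r) 1) 0 []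

/-- The number in `{0, 1, 2, 3}` whose binary digits are the coordinates of `a`. -/
def code (a : K4) : ℕ := a.1.val + 2 * a.2.val

/-- The element of `K4` coded by `x < 4`; inverse to `code`. -/
def lab (x : ℕ) : K4 := ((x : ZMod 2), ((x / 2 : ℕ) : ZMod 2))

/-- The balanced count function with total `n` in which the labels in the bit mask `S` (of size
`n % 4`) are used once more than the others. -/
def cnt (n S : ℕ) (a : K4) : ℕ := n / 4 + bit S (code a)

/-- The standard count function with total `n`: the surplus labels are the first `n % 4` ones in the
order `0, 1, 2, 3` of codes. -/
def std (n : ℕ) : K4 → ℕ := cnt n (2 ^ (n % 4) - 1)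

theorem code_lab : ∀ x < 4, code (lab x) = x := by decide
theorem code_lt : ∀ a, code a < 4 := by decide

theorem lab_xor : ∀ x < 4, ∀ y < 4, Nat.xor x y < 4 ∧ lab (Nat.xor x y) = lab x + lab y := by
  decide

theorem sig_spec : ∀ S < 16, sig S < 4 ∧ ∑ a : K4, bit S (code a) • a = lab (sig S) := by
  decide +kernel

theorem cand_spec : ∀ r < 4, ∀ σ < 4, ∀ S ∈ cand r σ,
    S < 16 ∧ ∑ a : K4, bit S (code a) = r ∧ sig S = σ := by
  decide +kernel

theorem bit_le : ∀ S < 16, ∀ a, bit S (code a) ≤ 1 := by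
  decide +kernel

theorem wt_cnt {n S : ℕ} (hS : S < 16) : wt (cnt n S) = lab (sig S) := by
  have : cnt n S = fun a => bit S (code a) + n / 4 := by
    funext a; exact Nat.add_comm _ _
  rw [this, wt_add_const, wt, (sig_spec S hS).2]

theorem sum_cnt {n S : ℕ} (h : ∑ a : K4, bit S (code a) = n % 4) : ∑ a, cnt n S a = n := by
  simp only [cnt, Finset.sum_add_distrib, Finset.sum_const, Finset.card_univ, card_K4,
    smul_eq_mul, h]
  omega

theorem search_sound : ∀ (ks : List ℕ) (n S x : ℕ) (used : List ℕ), S < 16 → x < 4 →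
    (∀ u ∈ used, u < 4) → ∑ a : K4, bit S (code a) = n % 4 → search ks n S x used = true →
    StepChain ks (cnt n S) (lab x) (used.map lab) (std (n + ks.sum))
  | [], n, S, x, used, _, _, _, _, h => by
    simp only [search, Bool.and_eq_true, Nat.beq_eq] at h
    obtain ⟨rfl, rfl⟩ := h
    exact ⟨rfl, rfl⟩
  | k :: ks, n, S, x, used, hS, hx, hu, hn, h => by
    simp only [search, List.any_eq_true, Bool.and_eq_true] at h
    obtain ⟨s, hs, hsu, S', hS', hle, y, hy, hlt, hrec⟩ := h
    replace hs : s < 4 := by revert s; simp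
    replace hy : y < 4 := by revert y; simp
    obtain ⟨hσ, hσS⟩ := sig_spec S hS
    obtain ⟨hX, hX'⟩ := lab_xor x hx _ hσ
    obtain ⟨hY, hY'⟩ := lab_xor s hs _ hX
    obtain ⟨h16, hcard, hsig⟩ := cand_spec _ (Nat.mod_lt _ (by norm_num)) _ hY S' hS'
    have hdiv : n / 4 ≤ (n + k) / 4 := Nat.div_le_div_right (by omega)
    have ih := search_sound ks (n + k) S' y (s :: used) h16 hy (by simpa using ⟨hs, hu⟩)
      hcard hrec
    refine ⟨lab s, cnt (n + k) S', lab y, ?_, ⟨?_, ?_, ?_, ?_, ?_⟩, ?_⟩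
    · intro hmem
      obtain ⟨u, hu1, hu2⟩ := List.mem_map.1 hmem
      have : s = u := by rw [← code_lab s hs, ← code_lab u (hu u hu1), hu2]
      subst this
      have := List.all_eq_true.1 hsu s hu1
      simp at this
    · intro a
      have := List.all_eq_true.1 hle (code a) (by have := code_lt a; simp; omega)
      replace this : bit S (code a) ≤ bit S' (code a) + ((n + k) / 4 - n / 4) :=
        Nat.le_of_ble_eq_true this
      simp only [cnt]; omega
    · replace hlt : bit S y < bit S' y + ((n + k) / 4 - n / 4) := Nat.le_of_ble_eq_true hlt
      simp only [cnt, code_lab y hy]; omega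
    · rw [sum_cnt hn]; exact sum_cnt hcard
    · rw [wt_cnt hS, wt_cnt h16, hsig, hY', hX']
      have h2 : ∀ a b c : K4, a = b + c + (a + (b + c)) := by decide
      exact h2 _ _ _
    · intro a b
      have := bit_le S' h16 a
      simp only [cnt]; omega
    · simpa [add_assoc] using ih

set_option maxRecDepth 100000 in
theorem searchAll_true : searchAll = true := by decide +kernel

theorem std_bits : ∀ r < 4, 2 ^ r - 1 < 16 ∧ ∑ a : K4, bit (2 ^ r - 1) (code a) = r := by
  decide +kernel

theorem std_add_mul (n c : ℕ) : std (n + 4 * c) = fun a => std n a + c := by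
  funext a
  have h1 : (n + 4 * c) % 4 = n % 4 := by omega
  have h2 : (n + 4 * c) / 4 = n / 4 + c := by omega
  simp only [std, cnt, h1, h2]; omega

/-- Any four consecutive edges lead from the standard state to the standard state, receiving the four
different edge labels. -/
theorem block (n : ℕ) (k : Fin 4 → ℕ) (hk : ∀ i, 2 ≤ k i) :
    StepChain [k 0, k 1, k 2, k 3] (std n) 0 [] (std (n + (k 0 + k 1 + k 2 + k 3))) := by
  have key : ∀ i, ∃ c l, l ∈ [2, 3, 4, 5] ∧ k i = l + 4 * c := fun i =>
    ⟨(k i - 2) / 4, (k i - 2) % 4 + 2, by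
      have := Nat.mod_lt (k i - 2) (show 0 < 4 by norm_num); simp; omega, by
      have := hk i; omega⟩
  choose c l hl hkl using key
  have h := searchAll_true
  simp only [searchAll, List.all_eq_true] at h
  have hr : n % 4 ∈ [0, 1, 2, 3] := by simp; omega
  have h1 := h _ hr _ (hl 0) _ (hl 1) _ (hl 2) _ (hl 3)
  have hr4 : n % 4 < 4 := Nat.mod_lt _ (by norm_num)
  have h2 := search_sound _ _ _ _ _ (std_bits _ hr4).1 (by norm_num) (by simp)
    (by rw [Nat.mod_mod]; exact (std_bits _ hr4).2) h1
  obtain ⟨d, hd, hp⟩ := h2.shift (ks' := [k 0, k 1, k 2, k 3])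
    (by simp only [List.forall₂_cons, List.forall₂_nil_left_iff]
        exact ⟨⟨_, hkl 0⟩, ⟨_, hkl 1⟩, ⟨_, hkl 2⟩, ⟨_, hkl 3⟩, trivial⟩) (n / 4)
  have e1 : std n = fun a => std (n % 4) a + n / 4 := by
    rw [← std_add_mul, Nat.mod_add_div]
  have e2 : std (n + (k 0 + k 1 + k 2 + k 3)) =
      fun a => std (n % 4 + [l 0, l 1, l 2, l 3].sum) a + (n / 4 + d) := by
    rw [← std_add_mul]
    congr 1
    simp only [List.sum_cons, List.sum_nil] at hd ⊢
    omega
  rw [e1, e2]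
  have e3 : std (n % 4) = cnt (n % 4) (2 ^ (n % 4) - 1) := by simp [std]
  rw [e3]
  exact hp

/-! ### Reachable states -/

/-- `Reach k n p t x`: the first `n` edges of a path whose `i`-th edge has `k i + 1` vertices can be
labeled such that all prefixes are balanced, with vertex label counts `p`, edge label counts `t`
and exit label `x`. The path starts at a single vertex labeled `0`. -/
inductive Reach (k : ℕ → ℕ) : ℕ → (K4 → ℕ) → (K4 → ℕ) → K4 → Prop
  | zero : Reach k 0 (std 1) (fun _ => 0) 0
  | succ {n : ℕ} {p t : K4 → ℕ} {x s : K4} {p' : K4 → ℕ} {y : K4} :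
    Reach k n p t x → Step (k n) p x s p' y →
    Balanced4 (fun a => t a + if s = a then 1 else 0) →
    Reach k (n + 1) p' (fun a => t a + if s = a then 1 else 0) y

/-- A `StepChain` extends a reachable state. Edge counts of the form `c + u.count` with `u` free of
duplicates are balanced. -/
theorem Reach.chain (k : ℕ → ℕ) (c : ℕ) : ∀ (ks : List ℕ) (n : ℕ) (p : K4 → ℕ) (x : K4)
    (u : List K4) (q : K4 → ℕ), ks = (List.range' n ks.length).map k → u.Nodup →
    Reach k n p (fun a => c + u.count a) x → StepChain ks p x u q →
    ∃ u' : List K4, u'.Nodup ∧ u'.length = u.length + ks.length ∧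
      Reach k (n + ks.length) q (fun a => c + u'.count a) 0
  | [], n, p, x, u, q, _, hu, hr, hc => by
    obtain ⟨rfl, rfl⟩ := hc
    exact ⟨u, hu, by simp, by simpa using hr⟩
  | k₁ :: ks, n, p, x, u, q, hk, hu, hr, hc => by
    obtain ⟨s, p', y, hs, hst, hc'⟩ := hc
    simp only [List.length_cons, List.range'_succ, List.map_cons, List.cons.injEq] at hk
    have hu' : (s :: u).Nodup := List.nodup_cons.2 ⟨hs, hu⟩
    have ht : (fun a => (c + u.count a) + if s = a then 1 else 0) =
        fun a => c + (s :: u).count a := by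
      funext a; rw [List.count_cons, ← add_assoc]; simp
    have hr' := hr.succ (hk.1 ▸ hst) (by
      rw [ht]
      intro a b
      have := List.nodup_iff_count_le_one.1 hu' a
      dsimp only
      omega)
    rw [ht] at hr'
    obtain ⟨u', h1, h2, h3⟩ := Reach.chain k c ks (n + 1) p' y (s :: u) q hk.2 hu' hr' hc'
    refine ⟨u', h1, ?_, ?_⟩
    · simp only [List.length_cons] at h2 ⊢; omega
    · have e : n + (k₁ :: ks).length = n + 1 + ks.length := by
        simp only [List.length_cons]; omega
      rw [e]; exact h3

theorem count_eq_one : ∀ u : List K4, u.Nodup → u.length = 4 → ∀ a, u.count a = 1 := by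
  intro u hu hl a
  have h1 : u.toFinset = Finset.univ := by
    rw [← Finset.card_eq_iff_eq_univ, List.toFinset_card_of_nodup hu, hl, card_K4]
  exact List.count_eq_one_of_mem hu (List.mem_toFinset.1 (h1 ▸ Finset.mem_univ a))

theorem reach_four_mul (k : ℕ → ℕ) (hk : ∀ i, 2 ≤ k i) (q : ℕ) :
    ∃ n, Reach k (4 * q) (std n) (fun _ => q) 0 := by
  induction q with
  | zero => exact ⟨1, Reach.zero⟩
  | succ q ih =>
    obtain ⟨n, hn⟩ := ih
    obtain ⟨u, h1, h2, h3⟩ := Reach.chain k q _ (4 * q) _ _ [] _ (by simp [List.range'])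
      List.nodup_nil (by simpa using hn) (block n (fun i => k (4 * q + i)) fun i => hk _)
    simp only [count_eq_one u h1 h2] at h3
    exact ⟨_, h3⟩

/-- Since every prefix of a reachable sequence is reachable, it suffices to reach some multiple of
four. -/
theorem exists_reach (k : ℕ → ℕ) (hk : ∀ i, 2 ≤ k i) (n : ℕ) : ∃ p t x, Reach k n p t x := by
  have hdown : ∀ d n, (∃ p t x, Reach k (n + d) p t x) → ∃ p t x, Reach k n p t x := by
    intro d
    induction d with
    | zero => exact fun n h => h
    | succ d ih =>
      rintro n ⟨p, t, x, h⟩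
      cases h with
      | succ h _ _ => exact ih n ⟨_, _, _, h⟩
  refine hdown (3 * n) n ?_
  obtain ⟨N, hN⟩ := reach_four_mul k hk n
  exact ⟨_, _, _, (by omega : 4 * n = n + 3 * n) ▸ hN⟩

theorem Reach.balanced {k : ℕ → ℕ} {n : ℕ} {p t : K4 → ℕ} {x : K4} (h : Reach k n p t x) :
    Balanced4 p ∧ Balanced4 t := by
  cases h with
  | zero => exact ⟨by unfold Balanced4; decide +kernel, fun _ _ => Nat.zero_le _⟩
  | succ _ h1 h2 => exact ⟨h1.bal, h2⟩

/-! ### Labelings with prescribed label counts -/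

/-- Labeling one more vertex `w` of `A` by `y`. -/
theorem fibers_update {V : Type*} [DecidableEq V] {A : Finset V} {M : K4 → ℕ} {w : V}
    (hw : w ∈ A) {y : K4} (hy : 0 < M y) {f : V → K4}
    (hf : ∀ a, ((A.erase w).filter fun v => f v = a).card = Function.update M y (M y - 1) a)
    (a : K4) : (A.filter fun v => Function.update f w y v = a).card = M a := by
  have h1 : (A.erase w).filter (fun v => Function.update f w y v = a) =
      (A.erase w).filter fun v => f v = a := by
    refine Finset.filter_congr fun v hv => ?_
    rw [Function.update_of_ne (Finset.ne_of_mem_erase hv)]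
  conv_lhs => rw [← Finset.insert_erase hw]
  rw [Finset.filter_insert, h1, Function.update_self]
  by_cases hya : y = a
  · subst hya
    rw [if_pos rfl, Finset.card_insert_of_notMem (by simp), hf, Function.update_self]
    omega
  · rw [if_neg hya, hf, Function.update_of_ne (Ne.symm hya)]

theorem sum_update_pred {M : K4 → ℕ} {y : K4} (hy : 0 < M y) :
    ∑ a, Function.update M y (M y - 1) a + 1 = ∑ a, M a := by
  rw [Finset.sum_update_of_mem (Finset.mem_univ y), Finset.sdiff_singleton_eq_erase]
  have := Finset.add_sum_erase Finset.univ M (Finset.mem_univ y)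
  omega

theorem exists_fibers {V : Type*} [DecidableEq V] (A : Finset V) (M : K4 → ℕ)
    (hM : ∑ a, M a = A.card) : ∃ f : V → K4, ∀ a, (A.filter fun v => f v = a).card = M a := by
  induction hN : A.card generalizing A M with
  | zero =>
    rw [hN] at hM
    rw [Finset.card_eq_zero] at hN
    subst hN
    refine ⟨fun _ => 0, fun a => ?_⟩
    have := Finset.sum_eq_zero_iff.1 hM a (Finset.mem_univ a)
    simp [this]
  | succ N ih =>
    obtain ⟨w, hw⟩ := Finset.card_pos.1 (by omega : 0 < A.card)
    obtain ⟨y, -, hy⟩ := Finset.exists_ne_zero_of_sum_ne_zero (by omega : ∑ a, M a ≠ 0)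
    have hy' : 0 < M y := Nat.pos_of_ne_zero hy
    have hc := Finset.card_erase_of_mem hw
    have hs := sum_update_pred hy'
    obtain ⟨f, hf⟩ := ih (A.erase w) (Function.update M y (M y - 1)) (by omega) (by omega)
    exact ⟨_, fibers_update hw hy' hf⟩

/-- A finite set can be labeled with prescribed label counts `M` and a prescribed label at one vertex,
provided `M` uses that label. -/
theorem exists_fibers_with {V : Type*} [DecidableEq V] (A : Finset V) (M : K4 → ℕ) (w : V)
    (hw : w ∈ A) (y : K4) (hy : 0 < M y) (hM : ∑ a, M a = A.card) :
    ∃ f : V → K4, f w = y ∧ ∀ a, (A.filter fun v => f v = a).card = M a := by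
  have hc := Finset.card_erase_add_one hw
  have hs := sum_update_pred hy
  obtain ⟨f, hf⟩ := exists_fibers (A.erase w) (Function.update M y (M y - 1)) (by omega)
  exact ⟨_, Function.update_self .., fibers_update hw hy hf⟩

theorem sum_eq_wt {V : Type*} (A : Finset V) (M : K4 → ℕ) (f : V → K4)
    (hf : ∀ a, (A.filter fun v => f v = a).card = M a) : ∑ v ∈ A, f v = wt M := by
  refine (Finset.sum_fiberwise' A f id).symm.trans ?_
  simp only [Finset.sum_const, hf, id, wt]

/-! ### Realization on a hyperpath -/

/-- The starting vertex `x₀` together with the vertices of the first `n` edges. -/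
def prefixVerts {V : Type*} [DecidableEq V] {m : ℕ} (e : Fin m → Finset V) (x₀ : V) (n : ℕ) :
    Finset V :=
  insert x₀ ((Finset.univ.filter fun i : Fin m => (i : ℕ) < n).biUnion e)

section
variable {V : Type*} [DecidableEq V] {m : ℕ} {e : Fin m → Finset V} {x₀ : V}

theorem mem_prefixVerts {n : ℕ} {v : V} :
    v ∈ prefixVerts e x₀ n ↔ v = x₀ ∨ ∃ i : Fin m, (i : ℕ) < n ∧ v ∈ e i := by
  simp [prefixVerts]

theorem prefixVerts_succ {n : ℕ} (h : n < m) :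
    prefixVerts e x₀ (n + 1) = prefixVerts e x₀ n ∪ (e ⟨n, h⟩ \ prefixVerts e x₀ n) := by
  ext v
  rw [Finset.union_sdiff_self_eq_union, Finset.mem_union, mem_prefixVerts, mem_prefixVerts,
    or_assoc]
  refine or_congr_right ⟨?_, ?_⟩
  · rintro ⟨i, hi, hv⟩
    rcases Nat.lt_succ_iff_lt_or_eq.1 hi with h' | h'
    · exact Or.inl ⟨i, h', hv⟩
    · exact Or.inr (by rwa [show (⟨n, h⟩ : Fin m) = i from Fin.ext h'.symm])
  · rintro (⟨i, hi, hv⟩ | hv)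
    · exact ⟨i, by omega, hv⟩
    · exact ⟨⟨n, h⟩, Nat.lt_succ_self n, hv⟩

theorem notMem_prefixVerts (h₂ : ∀ i j : Fin m, (i : ℕ) + 2 ≤ (j : ℕ) → e i ∩ e j = ∅)
    (hx : ∀ j : Fin m, 0 < (j : ℕ) → x₀ ∉ e j) {n : ℕ} {j : Fin m} (hj : n < j) {v : V}
    (hv : v ∈ e j) : v ∉ prefixVerts e x₀ n := by
  rw [mem_prefixVerts]
  rintro (rfl | ⟨i, hi, hvi⟩)
  · exact hx j (by omega) hv
  · have : v ∈ e i ∩ e j := Finset.mem_inter.2 ⟨hvi, hv⟩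
    rw [h₂ i j (by omega)] at this
    simp at this

/-- Each edge meets the preceding part of the path in exactly one vertex. -/
theorem exists_inter_prefixVerts
    (h₁ : ∀ i j : Fin m, (i : ℕ) + 1 = (j : ℕ) → (e i ∩ e j).card = 1)
    (h₂ : ∀ i j : Fin m, (i : ℕ) + 2 ≤ (j : ℕ) → e i ∩ e j = ∅)
    (hx₀ : ∀ h : 0 < m, x₀ ∈ e ⟨0, h⟩)
    (hx : ∀ j : Fin m, 0 < (j : ℕ) → x₀ ∉ e j) {n : ℕ} (h : n < m) :
    ∃ v, e ⟨n, h⟩ ∩ prefixVerts e x₀ n = {v} := by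
  cases n with
  | zero =>
    refine ⟨x₀, ?_⟩
    ext v
    simp only [Finset.mem_inter, mem_prefixVerts, Finset.mem_singleton]
    constructor
    · rintro ⟨-, hv | ⟨i, hi, -⟩⟩
      · exact hv
      · omega
    · rintro rfl
      exact ⟨hx₀ h, Or.inl rfl⟩
  | succ n =>
    have hn : n < m := by omega
    obtain ⟨v, hv⟩ := Finset.card_eq_one.1 (h₁ ⟨n, hn⟩ ⟨n + 1, h⟩ rfl)
    refine ⟨v, ?_⟩
    rw [← hv, Finset.inter_comm]
    ext w
    simp only [Finset.mem_inter, prefixVerts_succ hn, Finset.union_sdiff_self_eq_union,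
      Finset.mem_union]
    constructor
    · rintro ⟨h' | h', hw⟩
      · exact absurd h' (notMem_prefixVerts h₂ hx (Nat.lt_succ_self n) hw)
      · exact ⟨h', hw⟩
    · exact fun ⟨h', hw⟩ => ⟨Or.inr h', hw⟩

/-- A reachable state is realized by a labeling of the first `n` edges: `p` and `t` count vertex and
edge labels, and the vertex shared with the next edge has the label `x`. -/
theorem Reach.realize
    (h₁ : ∀ i j : Fin m, (i : ℕ) + 1 = (j : ℕ) → (e i ∩ e j).card = 1)
    (h₂ : ∀ i j : Fin m, (i : ℕ) + 2 ≤ (j : ℕ) → e i ∩ e j = ∅)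
    (hx₀ : ∀ h : 0 < m, x₀ ∈ e ⟨0, h⟩)
    (hx : ∀ j : Fin m, 0 < (j : ℕ) → x₀ ∉ e j)
    {k : ℕ → ℕ} (hk : ∀ i : Fin m, (e i).card = k i + 1)
    {n : ℕ} {p t : K4 → ℕ} {x : K4} (hr : Reach k n p t x) (hn : n ≤ m) :
    ∃ c : V → K4,
      (∀ a, ((prefixVerts e x₀ n).filter fun v => c v = a).card = p a) ∧
      (∀ a, (Finset.univ.filter fun i : Fin m =>
        (i : ℕ) < n ∧ edgeSum c (e i) = a).card = t a) ∧
      ∀ h : n < m, ∀ v, e ⟨n, h⟩ ∩ prefixVerts e x₀ n = {v} → c v = x := by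
  induction hr with
  | zero =>
    refine ⟨fun _ => 0, fun a => ?_, fun a => by simp, fun _ _ _ => rfl⟩
    have : prefixVerts e x₀ 0 = {x₀} := by ext v; simp [mem_prefixVerts]
    rw [this]
    have : ∀ a : K4, std 1 a = if (0 : K4) = a then 1 else 0 := by decide +kernel
    rw [this, Finset.filter_singleton]
    split_ifs <;> simp
  | @succ n p t x s p' y hr hst hbal ih =>
    have hnm : n < m := hn
    obtain ⟨c, hc₁, hc₂, hc₃⟩ := ih hnm.le
    obtain ⟨v, hv⟩ := exists_inter_prefixVerts h₁ h₂ hx₀ hx hnm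
    have hcv := hc₃ hnm v hv
    set U := prefixVerts e x₀ n with hU
    set A := e ⟨n, hnm⟩ \ U with hA
    have hUA : Disjoint U A := Finset.disjoint_sdiff
    have hAcard : A.card = k n := by
      have := Finset.card_inter_add_card_sdiff (e ⟨n, hnm⟩) U
      rw [hv, Finset.card_singleton, hk ⟨n, hnm⟩] at this
      rw [hA]
      dsimp only at this
      omega
    have hsum : ∑ a, (p' a - p a) = A.card := by
      have h' : ∑ a, p' a = ∑ a, (p a + (p' a - p a)) :=
        Finset.sum_congr rfl fun a _ => by have := hst.le a; omega
      rw [hst.sum_eq, Finset.sum_add_distrib] at h'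
      omega
    have hy : 0 < p' y - p y := by have := hst.lt; omega
    -- the exit vertex of the new edge; for the last edge any new vertex will do
    obtain ⟨w, hwA, hw⟩ : ∃ w ∈ A, ∀ h : n + 1 < m, ∀ v',
        e ⟨n + 1, h⟩ ∩ prefixVerts e x₀ (n + 1) = {v'} → v' = w := by
      by_cases h : n + 1 < m
      · obtain ⟨w, hw⟩ := exists_inter_prefixVerts h₁ h₂ hx₀ hx h
        have hw' : w ∈ e ⟨n + 1, h⟩ ∩ prefixVerts e x₀ (n + 1) := by simp [hw]
        rw [Finset.mem_inter, prefixVerts_succ hnm, Finset.mem_union] at hw'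
        refine ⟨w, hw'.2.resolve_left
          (notMem_prefixVerts h₂ hx (Nat.lt_succ_self n) hw'.1), fun _ v' hv' => ?_⟩
        exact Finset.singleton_injective (hv'.symm.trans hw)
      · have : 0 < A.card := by
          rw [← hsum]
          exact hy.trans_le (Finset.single_le_sum (f := fun a => p' a - p a)
            (fun _ _ => Nat.zero_le _) (Finset.mem_univ y))
        obtain ⟨w, hw⟩ := Finset.card_pos.1 this
        exact ⟨w, hw, fun h' => absurd h' h⟩
    obtain ⟨f, hfw, hf⟩ := exists_fibers_with A (fun a => p' a - p a) w hwA y hy hsum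
    obtain ⟨c', hcU, hcA⟩ : ∃ c' : V → K4, (∀ u ∈ U, c' u = c u) ∧ ∀ u ∈ A, c' u = f u :=
      ⟨fun u => if u ∈ A then f u else c u,
        fun u hu => if_neg (Finset.disjoint_left.1 hUA hu), fun u hu => if_pos hu⟩
    have hold : ∀ i : Fin m, (i : ℕ) < n →
        edgeSum c' (e i) = edgeSum c (e i) := fun i hi =>
      Finset.sum_congr rfl fun u hu => hcU u (mem_prefixVerts.2 (Or.inr ⟨i, hi, hu⟩))
    have hnew : edgeSum c' (e ⟨n, hnm⟩) = s := by
      have hvU : v ∈ U := (Finset.mem_inter.1 (hv ▸ Finset.mem_singleton_self v)).2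
      rw [edgeSum, ← Finset.sum_inter_add_sum_sdiff (e ⟨n, hnm⟩) U, hv, Finset.sum_singleton,
        hcU v hvU, hcv, ← hA, Finset.sum_congr rfl hcA, sum_eq_wt A _ f hf, hst.sum_label]
      have hw : wt p + wt (fun a => p' a - p a) = wt p' := by
        rw [wt, wt, wt, ← Finset.sum_add_distrib]
        refine Finset.sum_congr rfl fun a _ => ?_
        rw [← add_smul, Nat.add_sub_cancel' (hst.le a)]
      rw [← hw]
      have h2 : ∀ a b c : K4, a + b = a + c + (c + b) := by decide
      exact h2 _ _ _
    refine ⟨c', fun a => ?_, fun a => ?_, fun h v' hv' => ?_⟩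
    · rw [prefixVerts_succ hnm, Finset.filter_union,
        Finset.card_union_of_disjoint (Finset.disjoint_filter_filter hUA),
        Finset.filter_congr fun u hu => by rw [hcU u hu],
        Finset.filter_congr (s := A) fun u hu => by rw [hcA u hu], hc₁, hf]
      exact Nat.add_sub_cancel' (hst.le a)
    · have : (Finset.univ.filter fun i : Fin m => (i : ℕ) < n + 1 ∧
          edgeSum c' (e i) = a) =
          (Finset.univ.filter fun i : Fin m => (i : ℕ) < n ∧ edgeSum c (e i) = a) ∪
            if s = a then {⟨n, hnm⟩} else ∅ := by
        ext i
        simp only [Finset.mem_filter, Finset.mem_univ, true_and, Finset.mem_union]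
        rcases lt_trichotomy (i : ℕ) n with hi | hi | hi
        · have hne : i ≠ ⟨n, hnm⟩ := fun h => by rw [h] at hi; exact lt_irrefl _ hi
          rw [hold i hi]
          split_ifs <;> simp [hi, hne, Nat.lt_succ_of_lt hi]
        · obtain rfl : i = ⟨n, hnm⟩ := Fin.ext hi
          rw [hnew]
          split_ifs with hs <;> simp [hs]
        · have hne : i ≠ ⟨n, hnm⟩ := fun h => by rw [h] at hi; exact lt_irrefl _ hi
          have h1 : ¬ (i : ℕ) < n := by omega
          have h2 : ¬ (i : ℕ) < n + 1 := by omega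
          split_ifs <;> simp [h1, h2, hne]
      rw [this, Finset.card_union_of_disjoint, hc₂]
      · dsimp only
        split_ifs with hs <;> simp
      · split_ifs <;> simp
    · obtain rfl := hw h v' hv'
      exact (hcA _ hwA).trans hfw

end

/-- Every hyperpath, i.e. every path hypergraph in which all edges have size at
least 3, is `Z₂×Z₂`-cordial. -/
theorem hyperpath_cordial {V : Type*} [DecidableEq V] (Vs : Finset V)
    (m : ℕ) (e : Fin m → Finset V)
    (hpath : IsPathHypergraph Vs m e)
    (hcard : ∀ i, 3 ≤ (e i).card) :
    Cordial Vs (Finset.univ.image e) := by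
  obtain ⟨hinj, h₁, h₂, rfl⟩ := hpath
  rcases Nat.eq_zero_or_pos m with rfl | hm
  · exact ⟨fun _ => 0, fun a b => by simp, fun a b => by simp⟩
  -- a vertex of the first edge lying in no other edge
  obtain ⟨x₀, hx₀, hx⟩ : ∃ x₀ ∈ e ⟨0, hm⟩, ∀ j : Fin m, 0 < (j : ℕ) → x₀ ∉ e j := by
    have hfar : ∀ j : Fin m, 1 < (j : ℕ) → ∀ v ∈ e ⟨0, hm⟩, v ∉ e j := fun j hj v hv hv' => by
      have : v ∈ e ⟨0, hm⟩ ∩ e j := Finset.mem_inter.2 ⟨hv, hv'⟩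
      rw [h₂ _ _ (show 0 + 2 ≤ (j : ℕ) by omega)] at this
      simp at this
    by_cases hm1 : 1 < m
    · have hlt : (e ⟨0, hm⟩ ∩ e ⟨1, hm1⟩).card < (e ⟨0, hm⟩).card := by
        have := hcard ⟨0, hm⟩
        rw [h₁ _ _ (by simp)]; omega
      have := Finset.card_inter_add_card_sdiff (e ⟨0, hm⟩) (e ⟨1, hm1⟩)
      obtain ⟨v, hv⟩ := Finset.card_pos.1 (by omega : 0 < (e ⟨0, hm⟩ \ e ⟨1, hm1⟩).card)
      rw [Finset.mem_sdiff] at hv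
      refine ⟨v, hv.1, fun j hj => ?_⟩
      rcases Nat.lt_or_ge 1 (j : ℕ) with h | h
      · exact hfar j h v hv.1
      · rw [show j = ⟨1, hm1⟩ from Fin.ext (by simp; omega)]
        exact hv.2
    · obtain ⟨v, hv⟩ := Finset.card_pos.1 (by have := hcard ⟨0, hm⟩; omega : 0 < (e ⟨0, hm⟩).card)
      exact ⟨v, hv, fun j hj => by omega⟩
  let k : ℕ → ℕ := fun i => if h : i < m then (e ⟨i, h⟩).card - 1 else 2
  have hk : ∀ i : Fin m, (e i).card = k i + 1 := fun i => by
    have := hcard i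
    simp only [k, i.isLt, dif_pos, Fin.eta]; omega
  have hk2 : ∀ i, 2 ≤ k i := fun i => by
    by_cases h : i < m
    · have := hcard ⟨i, h⟩; simp only [k, h, dif_pos]; omega
    · simp [k, h]
  obtain ⟨p, t, x, hr⟩ := exists_reach k hk2 m
  obtain ⟨c, hc₁, hc₂, -⟩ := hr.realize h₁ h₂ (fun _ => hx₀) hx hk le_rfl
  have hV : prefixVerts e x₀ m = Finset.univ.biUnion e := by
    ext v
    simp only [mem_prefixVerts, Finset.mem_biUnion, Finset.mem_univ, true_and]
    constructor
    · rintro (rfl | ⟨i, -, hi⟩)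
      exacts [⟨_, hx₀⟩, ⟨i, hi⟩]
    · exact fun ⟨i, hi⟩ => Or.inr ⟨i, i.isLt, hi⟩
  have hE : ∀ a, ((Finset.univ.image e).filter fun d => edgeSum c d = a).card = t a := fun a => by
    rw [Finset.filter_image, Finset.card_image_of_injective _ hinj, ← hc₂]
    simp
  refine ⟨c, fun a b => ?_, fun a b => ?_⟩
  · rw [← hV, hc₁, hc₁, abs_le]
    have h := hr.balanced.1 a b
    have h' := hr.balanced.1 b a
    omega
  · rw [hE, hE, abs_le]
    have h := hr.balanced.2 a b
    have h' := hr.balanced.2 b a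
    omega
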